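/- Soundness and completeness of tableaux for the basic justification logic J: for any constant specification CS for J, a J-formula A has a J^e_CS-tableau proof if and only if A is J_CS-valid. -/

import Mathlib

namespace JLTab

/-- Justification terms: variables, constants, application, sum,
verifier `!`, negative verifier `?`, weak negative verifier `?̄`. -/
inductive Term : Type
  | var : ℕ → Term
  | const : ℕ → Term
  | app : Term → Term → Term
  | sum : Term → Term → Term
  | bang : Term → Term
  | quest : Term → Term
  | qbar : Term → Term
  deriving DecidableEq

/-- JL-formulas: `A ::= p | ⊥ | ¬A | A → A | t:A`. -/
inductive Fml : Type
  | prop : ℕ → Fml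
  | bot : Fml
  | neg : Fml → Fml
  | imp : Fml → Fml → Fml
  | box : Term → Fml → Fml
  deriving DecidableEq

/-- A justification logic JL is J extended by any combination of jT, jD, j4, jB, j5. -/
structure Logic where
  hasT : Bool
  hasD : Bool
  has4 : Bool
  hasB : Bool
  has5 : Bool

/-- The basic justification logic J. -/
def Logic.J : Logic := ⟨false, false, false, false, false⟩

/-- The logic of proofs LP = JT4. -/
def Logic.LP : Logic := ⟨true, false, true, false, false⟩

/-- The logic JT45. -/
def Logic.JT45 : Logic := ⟨true, false, true, false, true⟩

/-- Propositional evaluation of a formula, treating propositional variables and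
formulas `t:A` as atoms. -/
def evalProp (v : Fml → Bool) : Fml → Bool
  | .prop n => v (.prop n)
  | .bot => false
  | .neg A => !(evalProp v A)
  | .imp A B => !(evalProp v A) || evalProp v B
  | .box t A => v (.box t A)

/-- A propositional tautology. -/
def IsTaut (A : Fml) : Prop := ∀ v : Fml → Bool, evalProp v A = true

/-- Axiom instances of the justification logic `L`. -/
inductive Axm (L : Logic) : Fml → Prop
  | taut {A} : IsTaut A → Axm L A
  | sumL {s t A} : Axm L (.imp (.box s A) (.box (.sum s t) A))
  | sumR {s t A} : Axm L (.imp (.box s A) (.box (.sum t s) A))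
  | jK {s t A B} :
      Axm L (.imp (.box s (.imp A B)) (.imp (.box t A) (.box (.app s t) B)))
  | jT {t A} : L.hasT = true → Axm L (.imp (.box t A) A)
  | jD {t} : L.hasD = true → Axm L (.imp (.box t .bot) .bot)
  | j4 {t A} : L.has4 = true → Axm L (.imp (.box t A) (.box (.bang t) (.box t A)))
  | jB {t A} : L.hasB = true →
      Axm L (.imp (.neg A) (.box (.qbar t) (.neg (.box t A))))
  | j5 {t A} : L.has5 = true →
      Axm L (.imp (.neg (.box t A)) (.box (.quest t) (.neg (.box t A))))

/-- Formulas of the form `c_{i_n} : ⋯ : c_{i_1} : A` (n ≥ 1) with `A` an axiom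
instance of `L`; exactly the formulas produced by Iterated Axiom Necessitation. -/
inductive IsIAN (L : Logic) : Fml → Prop
  | base {c A} : Axm L A → IsIAN L (.box (.const c) A)
  | step {c F} : IsIAN L F → IsIAN L (.box (.const c) F)

/-- A constant specification for `L`: a downward closed set of formulas of the
form `c_{i_n} : ⋯ : c_{i_1} : A` with `A` an axiom instance of `L`. -/
structure ConstSpec (L : Logic) where
  set : Set Fml
  mem_ian : ∀ F ∈ set, IsIAN L F
  downward : ∀ c F, Fml.box (Term.const c) F ∈ set → IsIAN L F → F ∈ set

/-- The Hilbert system JL_CS: axioms of `L`, Modus Ponens, and Iterated Axiom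
Necessitation restricted to the constant specification `cs`. -/
inductive Deriv (L : Logic) (cs : ConstSpec L) : Fml → Prop
  | axm {A} : Axm L A → Deriv L cs A
  | mp {A B} : Deriv L cs (.imp A B) → Deriv L cs A → Deriv L cs B
  | ian {F} : F ∈ cs.set → Deriv L cs F

/-- An M-model (Mkrtychev model): an admissible evidence function together with
a valuation of propositional variables. -/
structure MModel where
  ev : Term → Set Fml
  val : ℕ → Prop

/-- Truth in an M-model; `t:A` is true iff `A ∈ E(t)`. -/
def MModel.sat (M : MModel) : Fml → Prop
  | .prop n => M.val n
  | .bot => False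
  | .neg A => ¬ M.sat A
  | .imp A B => M.sat A → M.sat B
  | .box t A => A ∈ M.ev t

/-- `M` is an M-model for JL_CS: conditions E1–E3 always, and E4–E8 according to
the extra axioms of the logic `L`. -/
structure IsModel (L : Logic) (cs : ConstSpec L) (M : MModel) : Prop where
  e1 : ∀ s t A B, Fml.imp A B ∈ M.ev s → A ∈ M.ev t → B ∈ M.ev (.app s t)
  e2l : ∀ s t, M.ev s ⊆ M.ev (.sum s t)
  e2r : ∀ s t, M.ev t ⊆ M.ev (.sum s t)
  e3 : ∀ c F, Fml.box (.const c) F ∈ cs.set → F ∈ M.ev (.const c)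
  e4 : L.hasT = true → ∀ t A, A ∈ M.ev t → M.sat A
  e5 : L.hasD = true → ∀ t, Fml.bot ∉ M.ev t
  e6 : L.has4 = true → ∀ t A, A ∈ M.ev t → Fml.box t A ∈ M.ev (.bang t)
  e7 : L.hasB = true → ∀ t A, ¬ M.sat A → Fml.neg (.box t A) ∈ M.ev (.qbar t)
  e8 : L.has5 = true → ∀ t A, A ∉ M.ev t → Fml.neg (.box t A) ∈ M.ev (.quest t)

/-- `A` is JL_CS-valid: true in every M-model of JL_CS. -/
def Valid (L : Logic) (cs : ConstSpec L) (A : Fml) : Prop :=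
  ∀ M : MModel, IsModel L cs M → M.sat A

/-- `Subf A B`: `A` is a subformula of `B`. -/
inductive Subf : Fml → Fml → Prop
  | refl (A) : Subf A A
  | neg {A B} : Subf A B → Subf A (.neg B)
  | impL {A B C} : Subf A B → Subf A (.imp B C)
  | impR {A C B} : Subf A C → Subf A (.imp B C)
  | box {A B t} : Subf A B → Subf A (.box t B)

/-- `A` is a CS-subformula of the root set `R`: a subformula of a formula in
`R ∪ CS`. -/
def CSSub {L : Logic} (cs : ConstSpec L) (R : Set Fml) (A : Fml) : Prop :=
  (∃ B ∈ R, Subf A B) ∨ (∃ F ∈ cs.set, Subf A F)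

/-- `A` is a weak CS-subformula of the root set `R`: a subformula, or the
negation of a subformula, of a formula in `R ∪ CS`. -/
def WeakCSSub {L : Logic} (cs : ConstSpec L) (R : Set Fml) (A : Fml) : Prop :=
  CSSub cs R A ∨ ∃ C, A = Fml.neg C ∧ CSSub cs R C

/-- `SubTm u t`: `u` is a subterm of `t`. -/
inductive SubTm : Term → Term → Prop
  | refl (t) : SubTm t t
  | appL {u s t} : SubTm u s → SubTm u (.app s t)
  | appR {u s t} : SubTm u t → SubTm u (.app s t)
  | sumL {u s t} : SubTm u s → SubTm u (.sum s t)
  | sumR {u s t} : SubTm u t → SubTm u (.sum s t)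
  | bang {u t} : SubTm u t → SubTm u (.bang t)
  | quest {u t} : SubTm u t → SubTm u (.quest t)
  | qbar {u t} : SubTm u t → SubTm u (.qbar t)

/-- `OccT u A`: the term `u` occurs in the formula `A`. -/
inductive OccT (u : Term) : Fml → Prop
  | neg {A} : OccT u A → OccT u (.neg A)
  | impL {A B} : OccT u A → OccT u (.imp A B)
  | impR {A B} : OccT u B → OccT u (.imp A B)
  | boxT {t A} : SubTm u t → OccT u (.box t A)
  | boxF {t A} : OccT u A → OccT u (.box t A)

/-- The term `u` occurs in (some formula of) the root set `R`. -/
def OccRoot (R : Set Fml) (u : Term) : Prop := ∃ B ∈ R, OccT u B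

/-- Nodes of a tableau: JL-formulas `A`, and evidential formulas
`[t,A]` (`pos`) and `∼[t,A]` (`neg`). -/
inductive Node : Type
  | fml : Fml → Node
  | pos : Term → Fml → Node
  | neg : Term → Fml → Node
  deriving DecidableEq

/-- `TabN L cs pb cut R Γ n`: the branch `Γ` of a tableau with root set `R` has
a closed tableau continuation using `n` rule applications.  The flag `pb`
enables the analytic rules (PB), (PB_e); the flag `cut` enables the
unrestricted cut rules (cut_f), (cut_e).  The rules (e), (e_⊥), (!), (?̄), (?)
are enabled according to the extra axioms of the logic `L`.  Base cases are the
four branch-closure conditions. -/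
inductive TabN (L : Logic) (cs : ConstSpec L) (pb cut : Bool) (R : Set Fml) :
    Set Node → ℕ → Prop
  | closeF {Γ A} : Node.fml A ∈ Γ → Node.fml (.neg A) ∈ Γ → TabN L cs pb cut R Γ 0
  | closeE {Γ t A} : Node.pos t A ∈ Γ → Node.neg t A ∈ Γ → TabN L cs pb cut R Γ 0
  | closeBot {Γ} : Node.fml .bot ∈ Γ → TabN L cs pb cut R Γ 0
  | closeCS {Γ c F} : Fml.box (.const c) F ∈ cs.set →
      Node.fml (.neg (.box (.const c) F)) ∈ Γ → TabN L cs pb cut R Γ 0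
  | fNeg {Γ A n} : Node.fml (.neg (.neg A)) ∈ Γ →
      TabN L cs pb cut R (insert (Node.fml A) Γ) n → TabN L cs pb cut R Γ (n + 1)
  | fImp {Γ A B n} : Node.fml (.neg (.imp A B)) ∈ Γ →
      TabN L cs pb cut R (insert (Node.fml A) (insert (Node.fml (.neg B)) Γ)) n →
      TabN L cs pb cut R Γ (n + 1)
  | tImp {Γ A B m n} : Node.fml (.imp A B) ∈ Γ →
      TabN L cs pb cut R (insert (Node.fml (.neg A)) Γ) m →
      TabN L cs pb cut R (insert (Node.fml B) Γ) n →
      TabN L cs pb cut R Γ (m + n + 1)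
  | te {Γ t A n} : Node.fml (.box t A) ∈ Γ →
      TabN L cs pb cut R (insert (Node.pos t A) Γ) n → TabN L cs pb cut R Γ (n + 1)
  | fe {Γ t A n} : Node.fml (.neg (.box t A)) ∈ Γ →
      TabN L cs pb cut R (insert (Node.neg t A) Γ) n → TabN L cs pb cut R Γ (n + 1)
  | plusL {Γ t s A n} : Node.neg (.sum t s) A ∈ Γ →
      TabN L cs pb cut R (insert (Node.neg t A) Γ) n → TabN L cs pb cut R Γ (n + 1)
  | plusR {Γ t s A n} : Node.neg (.sum t s) A ∈ Γ →
      TabN L cs pb cut R (insert (Node.neg s A) Γ) n → TabN L cs pb cut R Γ (n + 1)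
  | appR {Γ s t A B n} : Node.pos s (.imp A B) ∈ Γ → Node.pos t A ∈ Γ →
      CSSub cs R (.imp A B) → OccRoot R (.app s t) →
      TabN L cs pb cut R (insert (Node.pos (.app s t) B) Γ) n →
      TabN L cs pb cut R Γ (n + 1)
  | rulePB {Γ A m n} : pb = true → CSSub cs R A →
      TabN L cs pb cut R (insert (Node.fml A) Γ) m →
      TabN L cs pb cut R (insert (Node.fml (.neg A)) Γ) n →
      TabN L cs pb cut R Γ (m + n + 1)
  | rulePBe {Γ t A m n} : pb = true → CSSub cs R A → OccRoot R t →
      TabN L cs pb cut R (insert (Node.pos t A) Γ) m →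
      TabN L cs pb cut R (insert (Node.neg t A) Γ) n →
      TabN L cs pb cut R Γ (m + n + 1)
  | cutF {Γ A m n} : cut = true →
      TabN L cs pb cut R (insert (Node.fml A) Γ) m →
      TabN L cs pb cut R (insert (Node.fml (.neg A)) Γ) n →
      TabN L cs pb cut R Γ (m + n + 1)
  | cutE {Γ t A m n} : cut = true →
      TabN L cs pb cut R (insert (Node.pos t A) Γ) m →
      TabN L cs pb cut R (insert (Node.neg t A) Γ) n →
      TabN L cs pb cut R Γ (m + n + 1)
  | ruleT {Γ t A n} : L.hasT = true → Node.pos t A ∈ Γ →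
      TabN L cs pb cut R (insert (Node.fml A) Γ) n → TabN L cs pb cut R Γ (n + 1)
  | ruleD {Γ t n} : L.hasD = true → Node.pos t .bot ∈ Γ →
      TabN L cs pb cut R (insert (Node.fml .bot) Γ) n → TabN L cs pb cut R Γ (n + 1)
  | rule4 {Γ t A n} : L.has4 = true → Node.neg (.bang t) (.box t A) ∈ Γ →
      TabN L cs pb cut R (insert (Node.neg t A) Γ) n → TabN L cs pb cut R Γ (n + 1)
  | ruleB {Γ t A n} : L.hasB = true → Node.neg (.qbar t) (.neg (.box t A)) ∈ Γ →
      TabN L cs pb cut R (insert (Node.fml A) Γ) n → TabN L cs pb cut R Γ (n + 1)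
  | rule5 {Γ t A n} : L.has5 = true → Node.neg (.quest t) (.neg (.box t A)) ∈ Γ →
      TabN L cs pb cut R (insert (Node.pos t A) Γ) n → TabN L cs pb cut R Γ (n + 1)

/-- There is a closed tableau below the branch `Γ` (root set `R`). -/
def Tab (L : Logic) (cs : ConstSpec L) (pb cut : Bool) (R : Set Fml)
    (Γ : Set Node) : Prop :=
  ∃ n, TabN L cs pb cut R Γ n

/-- A tableau proof of `A`: a closed tableau whose root is `¬A`. -/
def TabProof (L : Logic) (cs : ConstSpec L) (pb cut : Bool) (A : Fml) : Prop :=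
  Tab L cs pb cut {Fml.neg A} {Node.fml (Fml.neg A)}

/-- A single application of a JL^e_CS-tableau rule to the branch `Γ` (root set
`R`), producing the list of extended branches (one for a non-branching rule,
two for a branching rule). -/
inductive RuleApp (L : Logic) (cs : ConstSpec L) (R : Set Fml) (Γ : Set Node) :
    List (Set Node) → Prop
  | fNeg {A} : Node.fml (.neg (.neg A)) ∈ Γ →
      RuleApp L cs R Γ [insert (Node.fml A) Γ]
  | fImp {A B} : Node.fml (.neg (.imp A B)) ∈ Γ →
      RuleApp L cs R Γ [insert (Node.fml A) (insert (Node.fml (.neg B)) Γ)]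
  | tImp {A B} : Node.fml (.imp A B) ∈ Γ →
      RuleApp L cs R Γ [insert (Node.fml (.neg A)) Γ, insert (Node.fml B) Γ]
  | te {t A} : Node.fml (.box t A) ∈ Γ → RuleApp L cs R Γ [insert (Node.pos t A) Γ]
  | fe {t A} : Node.fml (.neg (.box t A)) ∈ Γ →
      RuleApp L cs R Γ [insert (Node.neg t A) Γ]
  | plusL {t s A} : Node.neg (.sum t s) A ∈ Γ →
      RuleApp L cs R Γ [insert (Node.neg t A) Γ]
  | plusR {t s A} : Node.neg (.sum t s) A ∈ Γ →
      RuleApp L cs R Γ [insert (Node.neg s A) Γ]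
  | appR {s t A B} : Node.pos s (.imp A B) ∈ Γ → Node.pos t A ∈ Γ →
      CSSub cs R (.imp A B) → OccRoot R (.app s t) →
      RuleApp L cs R Γ [insert (Node.pos (.app s t) B) Γ]
  | rulePB {A} : CSSub cs R A →
      RuleApp L cs R Γ [insert (Node.fml A) Γ, insert (Node.fml (.neg A)) Γ]
  | rulePBe {t A} : CSSub cs R A → OccRoot R t →
      RuleApp L cs R Γ [insert (Node.pos t A) Γ, insert (Node.neg t A) Γ]
  | ruleT {t A} : L.hasT = true → Node.pos t A ∈ Γ →
      RuleApp L cs R Γ [insert (Node.fml A) Γ]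
  | ruleD {t} : L.hasD = true → Node.pos t .bot ∈ Γ →
      RuleApp L cs R Γ [insert (Node.fml .bot) Γ]
  | rule4 {t A} : L.has4 = true → Node.neg (.bang t) (.box t A) ∈ Γ →
      RuleApp L cs R Γ [insert (Node.neg t A) Γ]
  | ruleB {t A} : L.hasB = true → Node.neg (.qbar t) (.neg (.box t A)) ∈ Γ →
      RuleApp L cs R Γ [insert (Node.fml A) Γ]
  | rule5 {t A} : L.has5 = true → Node.neg (.quest t) (.neg (.box t A)) ∈ Γ →
      RuleApp L cs R Γ [insert (Node.pos t A) Γ]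

/-- Satisfaction of tableau nodes in an M-model: `M` satisfies `[t,A]` iff
`A ∈ E(t)`, and satisfies `∼[t,A]` iff `A ∉ E(t)`. -/
def NodeSat (M : MModel) : Node → Prop
  | .fml A => M.sat A
  | .pos t A => A ∈ M.ev t
  | .neg t A => A ∉ M.ev t

/-- Branches reachable from the initial branch by tableau rule applications. -/
inductive Reach (L : Logic) (cs : ConstSpec L) (R : Set Fml) :
    Set Node → Set Node → Prop
  | refl (Γ) : Reach L cs R Γ Γ
  | step {Γ Γ' Γ'' exts} : Reach L cs R Γ Γ' → RuleApp L cs R Γ' exts →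
      Γ'' ∈ exts → Reach L cs R Γ Γ''

/-- One non-redundant tableau construction step: a rule application properly
extending the branch. -/
def Step (L : Logic) (cs : ConstSpec L) (R : Set Fml) (Γ Γ' : Set Node) : Prop :=
  ∃ exts, RuleApp L cs R Γ exts ∧ Γ' ∈ exts ∧ Γ ⊂ Γ'

/-- The term is in the language of the logic `L` (which contains those
operations occurring in the axioms of `L`). -/
def TermInLang (L : Logic) : Term → Prop
  | .var _ => True
  | .const _ => True
  | .app s t => TermInLang L s ∧ TermInLang L t
  | .sum s t => TermInLang L s ∧ TermInLang L t
  | .bang t => L.has4 = true ∧ TermInLang L t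
  | .quest t => L.has5 = true ∧ TermInLang L t
  | .qbar t => L.hasB = true ∧ TermInLang L t

/-- The formula is in the language of the logic `L`. -/
def FmlInLang (L : Logic) : Fml → Prop
  | .prop _ => True
  | .bot => True
  | .neg A => FmlInLang L A
  | .imp A B => FmlInLang L A ∧ FmlInLang L B
  | .box t A => TermInLang L t ∧ FmlInLang L A

/-- The initial branch of a tableau for a finite set `S` of formulas. -/
def branchOf (S : Finset Fml) : Set Node := Node.fml '' (↑S : Set Fml)

end JLTab

/-!
Soundness: every tableau rule preserves satisfiability of a branch in a given model, and a closed
branch is unsatisfiable.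

Completeness: closed tableaux are finite, so Zorn's lemma extends an unclosable branch to a maximal
one, which is saturated under the rules. Its nodes `[t,B]` generate a least admissible evidence
function `E`, and in the resulting model every root formula on the branch is true. The delicate
point is that `B ∈ E(t)` forces `[t,B]` onto the branch when `t` occurs in the root: evidence only
ever involves CS-subformulas and is built up along subterms of `t`, so that the analytic rules
(PB), (PB_e) and (·) apply at each stage.
-/

namespace JLTab

open Filter

variable {L : Logic} {cs : ConstSpec L} {pb cut : Bool} {R : Set Fml} {Γ Δ : Set Node}

/-! ### Subformulas and subterms -/

theorem Subf.trans {A B C : Fml} (hAB : Subf A B) (hBC : Subf B C) : Subf A C := by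
  induction hBC with
  | refl => exact hAB
  | neg _ ih => exact .neg ih
  | impL _ ih => exact .impL ih
  | impR _ ih => exact .impR ih
  | box _ ih => exact .box ih

theorem CSSub.of_subf {A B : Fml} (hB : CSSub cs R B) (hAB : Subf A B) : CSSub cs R A :=
  hB.imp (fun ⟨C, hC, hBC⟩ => ⟨C, hC, hAB.trans hBC⟩) fun ⟨F, hF, hBF⟩ => ⟨F, hF, hAB.trans hBF⟩

theorem SubTm.trans {s t u : Term} (hst : SubTm s t) (htu : SubTm t u) : SubTm s u := by
  induction htu with
  | refl => exact hst
  | appL _ ih => exact .appL ih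
  | appR _ ih => exact .appR ih
  | sumL _ ih => exact .sumL ih
  | sumR _ ih => exact .sumR ih
  | bang _ ih => exact .bang ih
  | quest _ ih => exact .quest ih
  | qbar _ ih => exact .qbar ih

theorem OccT.of_subTm {s t : Term} {A : Fml} (hst : SubTm s t) (ht : OccT t A) : OccT s A := by
  induction ht with
  | neg _ ih => exact .neg ih
  | impL _ ih => exact .impL ih
  | impR _ ih => exact .impR ih
  | boxT htu => exact .boxT (hst.trans htu)
  | boxF _ ih => exact .boxF ih

theorem OccT.of_subf {t : Term} {A B : Fml} (hAB : Subf A B) (hA : OccT t A) : OccT t B := by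
  induction hAB with
  | refl => exact hA
  | neg _ ih => exact .neg ih
  | impL _ ih => exact .impL ih
  | impR _ ih => exact .impR ih
  | box _ ih => exact .boxF ih

theorem OccRoot.of_subTm {s t : Term} (ht : OccRoot R t) (hst : SubTm s t) : OccRoot R s :=
  let ⟨B, hB, htB⟩ := ht
  ⟨B, hB, htB.of_subTm hst⟩

/-! ### Soundness -/

theorem TabN.not_forall_nodeSat {n : ℕ} (h : TabN L cs pb cut R Γ n) {M : MModel}
    (hM : IsModel L cs M) : ¬ ∀ x ∈ Γ, NodeSat M x := by
  have ext {Γ : Set Node} {x : Node} (hΓ : ∀ y ∈ Γ, NodeSat M y) (hx : NodeSat M x) :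
      ∀ y ∈ insert x Γ, NodeSat M y := Set.forall_insert_of_forall hΓ hx
  induction h with intro hΓ
  | closeF hA hnA => exact hΓ _ hnA (hΓ _ hA)
  | closeE hp hn => exact hΓ _ hn (hΓ _ hp)
  | closeBot h => exact hΓ _ h
  | closeCS hF hn => exact hΓ _ hn (hM.e3 _ _ hF)
  | fNeg h _ ih => exact ih (ext hΓ (not_not.mp (hΓ _ h)))
  | @fImp _ A B _ h _ ih =>
    obtain ⟨hA, hB⟩ : M.sat A ∧ ¬ M.sat B := Classical.not_imp.mp (hΓ _ h)
    exact ih (ext (ext hΓ hB) hA)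
  | @tImp _ A B _ _ h _ _ ih₁ ih₂ =>
    by_cases hA : M.sat A
    · exact ih₂ (ext hΓ ((show M.sat A → M.sat B from hΓ _ h) hA))
    · exact ih₁ (ext hΓ hA)
  | te h _ ih => exact ih (ext hΓ (show NodeSat M (.fml _) from hΓ _ h))
  | fe h _ ih => exact ih (ext hΓ (show NodeSat M (.fml _) from hΓ _ h))
  | plusL h _ ih => exact ih (ext hΓ fun ht => hΓ _ h (hM.e2l _ _ ht))
  | plusR h _ ih => exact ih (ext hΓ fun hs => hΓ _ h (hM.e2r _ _ hs))
  | appR hs ht _ _ _ ih => exact ih (ext hΓ (hM.e1 _ _ _ _ (hΓ _ hs) (hΓ _ ht)))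
  | @rulePB _ A _ _ _ _ _ _ ih₁ ih₂ | @cutF _ A _ _ _ _ _ ih₁ ih₂ =>
    by_cases hA : M.sat A
    · exact ih₁ (ext hΓ hA)
    · exact ih₂ (ext hΓ hA)
  | @rulePBe _ t A _ _ _ _ _ _ _ ih₁ ih₂ | @cutE _ t A _ _ _ _ _ ih₁ ih₂ =>
    by_cases hA : A ∈ M.ev t
    · exact ih₁ (ext hΓ hA)
    · exact ih₂ (ext hΓ hA)
  | ruleT hT h _ ih => exact ih (ext hΓ (hM.e4 hT _ _ (hΓ _ h)))
  | ruleD hD h => exact hM.e5 hD _ (hΓ _ h)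
  | rule4 h4 h _ ih => exact ih (ext hΓ fun ht => hΓ _ h (hM.e6 h4 _ _ ht))
  | ruleB hB h _ ih => exact ih (ext hΓ (not_not.mp fun hA => hΓ _ h (hM.e7 hB _ _ hA)))
  | rule5 h5 h _ ih => exact ih (ext hΓ (not_not.mp fun hA => hΓ _ h (hM.e8 h5 _ _ hA)))

theorem TabProof.valid {A : Fml} (h : TabProof L cs pb cut A) : Valid L cs A := by
  intro M hM
  by_contra hA
  obtain ⟨n, hn⟩ := h
  refine hn.not_forall_nodeSat hM ?_
  rintro _ rfl
  exact hA

/-! ### Compactness and maximal open branches -/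

section ScottNhds

variable {α : Type*} {S T : Set α}

/-- The neighbourhood filter of `S` in the Scott topology on sets: a property holds eventually
iff it holds for all supersets of some finite subset of `S`. It packages finite support and
monotonicity of closed tableaux into a single statement. -/
def scottNhds (S : Set α) : Filter (Set α) := ⨅ x ∈ S, 𝓟 {T | x ∈ T}

theorem tendsto_scottNhds {ι : Type*} {l : Filter ι} {f : ι → Set α} :
    Tendsto f l (scottNhds S) ↔ ∀ x ∈ S, ∀ᶠ i in l, x ∈ f i := by
  simp only [scottNhds, tendsto_iInf, tendsto_principal, Set.mem_ofPred_eq]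

theorem eventually_mem_scottNhds {x : α} (hx : x ∈ S) : ∀ᶠ T in scottNhds S, x ∈ T :=
  tendsto_scottNhds.mp tendsto_id x hx

theorem tendsto_insert_scottNhds (x : α) (S : Set α) :
    Tendsto (insert x) (scottNhds S) (scottNhds (insert x S)) := by
  refine tendsto_scottNhds.mpr (Set.forall_insert_of_forall (fun y hy => ?_) ?_)
  · exact (eventually_mem_scottNhds hy).mono fun T hT => Set.mem_insert_of_mem x hT
  · exact .of_forall (Set.mem_insert x)

theorem of_eventually_scottNhds {p : Set α → Prop} (h : ∀ᶠ U in scottNhds S, p U) (hST : S ⊆ T) :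
    p T :=
  have : Tendsto id (pure T) (scottNhds S) := tendsto_scottNhds.mpr fun _ hx => hST hx
  this.eventually h

theorem exists_mem_of_eventually_scottNhds_sUnion {c : Set (Set α)} (hc : IsChain (· ⊆ ·) c)
    (hne : c.Nonempty) {p : Set α → Prop} (h : ∀ᶠ T in scottNhds (⋃₀ c), p T) :
    ∃ T ∈ c, p T := by
  have : Nonempty c := hne.to_subtype
  have : IsDirectedOrder c := directedOn_iff_isDirectedOrder.mp hc.directedOn
  have htends : Tendsto (Subtype.val : c → Set α) atTop (scottNhds (⋃₀ c)) := by
    refine tendsto_scottNhds.mpr ?_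
    rintro x ⟨T, hT, hx⟩
    exact (eventually_ge_atTop ⟨T, hT⟩).mono fun U hTU => hTU hx
  obtain ⟨T, hT⟩ := (htends.eventually h).exists
  exact ⟨T, T.2, hT⟩

end ScottNhds

theorem TabN.eventually {n : ℕ} (h : TabN L cs pb cut R Γ n) :
    ∀ᶠ Θ in scottNhds Γ, TabN L cs pb cut R Θ n := by
  have mem {Γ : Set Node} {x : Node} (hx : x ∈ Γ) : ∀ᶠ Θ in scottNhds Γ, x ∈ Θ :=
    eventually_mem_scottNhds hx
  have ext {Γ : Set Node} {x : Node} {p : Set Node → Prop}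
      (hp : ∀ᶠ Θ in scottNhds (insert x Γ), p Θ) : ∀ᶠ Θ in scottNhds Γ, p (insert x Θ) :=
    (tendsto_insert_scottNhds x Γ).eventually hp
  induction h with
  | closeF hA hnA => filter_upwards [mem hA, mem hnA] with Θ using .closeF
  | closeE hp hn => filter_upwards [mem hp, mem hn] with Θ using .closeE
  | closeBot h => filter_upwards [mem h] with Θ using .closeBot
  | closeCS hF h => filter_upwards [mem h] with Θ using .closeCS hF
  | fNeg h _ ih => filter_upwards [mem h, ext ih] with Θ using .fNeg
  | fImp h _ ih => filter_upwards [mem h, ext (ext ih)] with Θ using .fImp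
  | tImp h _ _ ih₁ ih₂ => filter_upwards [mem h, ext ih₁, ext ih₂] with Θ using .tImp
  | te h _ ih => filter_upwards [mem h, ext ih] with Θ using .te
  | fe h _ ih => filter_upwards [mem h, ext ih] with Θ using .fe
  | plusL h _ ih => filter_upwards [mem h, ext ih] with Θ using .plusL
  | plusR h _ ih => filter_upwards [mem h, ext ih] with Θ using .plusR
  | appR hs ht hAB hst _ ih =>
    filter_upwards [mem hs, mem ht, ext ih] with Θ hs ht using .appR hs ht hAB hst
  | rulePB hpb hA _ _ ih₁ ih₂ => filter_upwards [ext ih₁, ext ih₂] with Θ using .rulePB hpb hA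
  | rulePBe hpb hA ht _ _ ih₁ ih₂ =>
    filter_upwards [ext ih₁, ext ih₂] with Θ using .rulePBe hpb hA ht
  | cutF hcut _ _ ih₁ ih₂ => filter_upwards [ext ih₁, ext ih₂] with Θ using .cutF hcut
  | cutE hcut _ _ ih₁ ih₂ => filter_upwards [ext ih₁, ext ih₂] with Θ using .cutE hcut
  | ruleT hT h _ ih => filter_upwards [mem h, ext ih] with Θ using .ruleT hT
  | ruleD hD h _ ih => filter_upwards [mem h, ext ih] with Θ using .ruleD hD
  | rule4 h4 h _ ih => filter_upwards [mem h, ext ih] with Θ using .rule4 h4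
  | ruleB hB h _ ih => filter_upwards [mem h, ext ih] with Θ using .ruleB hB
  | rule5 h5 h _ ih => filter_upwards [mem h, ext ih] with Θ using .rule5 h5

theorem TabN.mono {n : ℕ} (h : TabN L cs pb cut R Γ n) (hΓΔ : Γ ⊆ Δ) : TabN L cs pb cut R Δ n :=
  of_eventually_scottNhds h.eventually hΓΔ

/-- A maximal open branch: one that cannot be closed although every proper extension can. -/
def IsMaxOpen (cs : ConstSpec L) (pb cut : Bool) (R : Set Fml) (Δ : Set Node) : Prop :=
  Maximal (fun Θ => ¬ Tab L cs pb cut R Θ) Δ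

theorem exists_isMaxOpen_superset (h : ¬ Tab L cs pb cut R Γ) :
    ∃ Δ, Γ ⊆ Δ ∧ IsMaxOpen cs pb cut R Δ := by
  refine zorn_subset_nonempty {Δ | ¬ Tab L cs pb cut R Δ} (fun c hopen hc hne => ?_) Γ h
  refine ⟨⋃₀ c, ?_, fun _ => Set.subset_sUnion_of_mem⟩
  rintro ⟨n, hn⟩
  obtain ⟨Δ, hΔ, hclosed⟩ := exists_mem_of_eventually_scottNhds_sUnion hc hne hn.eventually
  exact hopen hΔ ⟨n, hclosed⟩

namespace IsMaxOpen

variable {x y : Node}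

theorem mem_or_tab_insert (hΔ : IsMaxOpen cs pb cut R Δ) (x : Node) :
    x ∈ Δ ∨ Tab L cs pb cut R (insert x Δ) :=
  or_iff_not_imp_right.mpr fun hx => hΔ.mem_of_prop_insert hx

theorem mem_of_rule (hΔ : IsMaxOpen cs pb cut R Δ)
    (rule : Tab L cs pb cut R (insert x Δ) → Tab L cs pb cut R Δ) : x ∈ Δ :=
  (hΔ.mem_or_tab_insert x).resolve_right fun hx => hΔ.prop (rule hx)

theorem mem_or_mem_of_rule (hΔ : IsMaxOpen cs pb cut R Δ)
    (rule : Tab L cs pb cut R (insert x Δ) → Tab L cs pb cut R (insert y Δ) →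
      Tab L cs pb cut R Δ) : x ∈ Δ ∨ y ∈ Δ :=
  (hΔ.mem_or_tab_insert x).imp_right fun hx => hΔ.mem_of_rule (rule hx)

end IsMaxOpen

/-! ### Saturated branches -/

/-- A saturated (Hintikka) branch: it is open and no rule available in every JL adds
information to it. -/
structure Saturated (cs : ConstSpec L) (R : Set Fml) (Δ : Set Node) : Prop where
  neg_notMem {A} : .fml A ∈ Δ → .fml (.neg A) ∉ Δ
  evNeg_notMem {t A} : .pos t A ∈ Δ → .neg t A ∉ Δ
  bot_notMem : .fml .bot ∉ Δ
  neg_cs_notMem {c F} : .box (.const c) F ∈ cs.set → .fml (.neg (.box (.const c) F)) ∉ Δ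
  fNeg {A} : .fml (.neg (.neg A)) ∈ Δ → .fml A ∈ Δ
  fImp {A B} : .fml (.neg (.imp A B)) ∈ Δ → .fml A ∈ Δ ∧ .fml (.neg B) ∈ Δ
  tImp {A B} : .fml (.imp A B) ∈ Δ → .fml (.neg A) ∈ Δ ∨ .fml B ∈ Δ
  te {t A} : .fml (.box t A) ∈ Δ → .pos t A ∈ Δ
  fe {t A} : .fml (.neg (.box t A)) ∈ Δ → .neg t A ∈ Δ
  plusL {s t A} : .neg (.sum s t) A ∈ Δ → .neg s A ∈ Δ
  plusR {s t A} : .neg (.sum s t) A ∈ Δ → .neg t A ∈ Δ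
  appR {s t A B} : .pos s (.imp A B) ∈ Δ → .pos t A ∈ Δ → CSSub cs R (.imp A B) →
    OccRoot R (.app s t) → .pos (.app s t) B ∈ Δ
  rulePB {A} : CSSub cs R A → .fml A ∈ Δ ∨ .fml (.neg A) ∈ Δ
  rulePBe {t A} : CSSub cs R A → OccRoot R t → .pos t A ∈ Δ ∨ .neg t A ∈ Δ

theorem IsMaxOpen.saturated (hΔ : IsMaxOpen cs true cut R Δ) : Saturated cs R Δ where
  neg_notMem hA hnA := hΔ.prop ⟨_, .closeF hA hnA⟩
  evNeg_notMem hp hn := hΔ.prop ⟨_, .closeE hp hn⟩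
  bot_notMem h := hΔ.prop ⟨_, .closeBot h⟩
  neg_cs_notMem hF h := hΔ.prop ⟨_, .closeCS hF h⟩
  fNeg h := hΔ.mem_of_rule fun ⟨_, hn⟩ => ⟨_, .fNeg h hn⟩
  fImp h :=
    ⟨hΔ.mem_of_rule fun ⟨_, hn⟩ =>
      ⟨_, .fImp h (hn.mono (Set.insert_subset_insert (Set.subset_insert _ _)))⟩,
    hΔ.mem_of_rule fun ⟨_, hn⟩ => ⟨_, .fImp h (hn.mono (Set.subset_insert _ _))⟩⟩
  tImp h := hΔ.mem_or_mem_of_rule fun ⟨_, hm⟩ ⟨_, hn⟩ => ⟨_, .tImp h hm hn⟩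
  te h := hΔ.mem_of_rule fun ⟨_, hn⟩ => ⟨_, .te h hn⟩
  fe h := hΔ.mem_of_rule fun ⟨_, hn⟩ => ⟨_, .fe h hn⟩
  plusL h := hΔ.mem_of_rule fun ⟨_, hn⟩ => ⟨_, .plusL h hn⟩
  plusR h := hΔ.mem_of_rule fun ⟨_, hn⟩ => ⟨_, .plusR h hn⟩
  appR hs ht hAB hst := hΔ.mem_of_rule fun ⟨_, hn⟩ => ⟨_, .appR hs ht hAB hst hn⟩
  rulePB hA := hΔ.mem_or_mem_of_rule fun ⟨_, hm⟩ ⟨_, hn⟩ => ⟨_, .rulePB rfl hA hm hn⟩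
  rulePBe hA ht := hΔ.mem_or_mem_of_rule fun ⟨_, hm⟩ ⟨_, hn⟩ => ⟨_, .rulePBe rfl hA ht hm hn⟩

/-! ### The model of a saturated branch -/

/-- `LeastEv cs E₀ t` is `E(t)` for the least evidence function `E` that contains `E₀` and
satisfies E1–E3. -/
inductive LeastEv (cs : ConstSpec L) (E₀ : Term → Set Fml) : Term → Set Fml
  | base {t B} : B ∈ E₀ t → LeastEv cs E₀ t B
  | const {c F} : Fml.box (.const c) F ∈ cs.set → LeastEv cs E₀ (.const c) F
  | sumL {s t B} : LeastEv cs E₀ s B → LeastEv cs E₀ (.sum s t) B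
  | sumR {s t B} : LeastEv cs E₀ t B → LeastEv cs E₀ (.sum s t) B
  | app {s t A B} : LeastEv cs E₀ s (.imp A B) → LeastEv cs E₀ t A → LeastEv cs E₀ (.app s t) B

/-- The evidence recorded on the branch `Δ`. A maximal branch may also contain `[t,B]` for
formulas `B` unrelated to the root, to which the analytic rules do not apply; these are left out. -/
def branchEv (cs : ConstSpec L) (R : Set Fml) (Δ : Set Node) (t : Term) : Set Fml :=
  {B | CSSub cs R B ∧ Node.pos t B ∈ Δ}

/-- The canonical M-model of the branch `Δ`. -/
def branchModel (cs : ConstSpec L) (R : Set Fml) (Δ : Set Node) : MModel where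
  ev := LeastEv cs (branchEv cs R Δ)
  val n := Node.fml (.prop n) ∈ Δ

theorem branchModel_isModel (cs : ConstSpec Logic.J) (R : Set Fml) (Δ : Set Node) :
    IsModel Logic.J cs (branchModel cs R Δ) where
  e1 _ _ _ _ hs ht := .app hs ht
  e2l _ _ _ hs := .sumL hs
  e2r _ _ _ ht := .sumR ht
  e3 _ _ hF := .const hF
  e4 h := absurd h Bool.false_ne_true
  e5 h := absurd h Bool.false_ne_true
  e6 h := absurd h Bool.false_ne_true
  e7 h := absurd h Bool.false_ne_true
  e8 h := absurd h Bool.false_ne_true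

theorem csSub_of_mem_leastEv {E₀ : Term → Set Fml} (hE₀ : ∀ t, ∀ B ∈ E₀ t, CSSub cs R B)
    {t : Term} {B : Fml} (h : B ∈ LeastEv cs E₀ t) : CSSub cs R B := by
  induction h with
  | base h => exact hE₀ _ _ h
  | const hF => exact .inr ⟨_, hF, .box (.refl _)⟩
  | sumL _ ih => exact ih
  | sumR _ ih => exact ih
  | app _ _ ih _ => exact ih.of_subf (.impR (.refl _))

theorem csSub_of_mem_branchModel_ev {t : Term} {B : Fml} (h : B ∈ (branchModel cs R Δ).ev t) :
    CSSub cs R B :=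
  csSub_of_mem_leastEv (fun _ _ hB => hB.1) h

namespace Saturated

theorem pos_mem_of_mem_ev (hΔ : Saturated cs R Δ) {t : Term} {B : Fml}
    (h : B ∈ (branchModel cs R Δ).ev t) (ht : OccRoot R t) : Node.pos t B ∈ Δ := by
  induction h with
  | base h => exact h.2
  | const hF =>
    have hcF : CSSub cs R _ := .inr ⟨_, hF, .refl _⟩
    exact hΔ.te ((hΔ.rulePB hcF).resolve_right (hΔ.neg_cs_notMem hF))
  | sumL hs ih =>
    have hpos := ih (ht.of_subTm (.sumL (.refl _)))
    exact (hΔ.rulePBe (csSub_of_mem_branchModel_ev hs) ht).resolve_right fun hneg =>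
      hΔ.evNeg_notMem hpos (hΔ.plusL hneg)
  | sumR ht' ih =>
    have hpos := ih (ht.of_subTm (.sumR (.refl _)))
    exact (hΔ.rulePBe (csSub_of_mem_branchModel_ev ht') ht).resolve_right fun hneg =>
      hΔ.evNeg_notMem hpos (hΔ.plusR hneg)
  | app hs _ ihs iht =>
    exact hΔ.appR (ihs (ht.of_subTm (.appL (.refl _)))) (iht (ht.of_subTm (.appR (.refl _))))
      (csSub_of_mem_branchModel_ev hs) ht

theorem truth_lemma (hΔ : Saturated cs R Δ) {B C : Fml} (hC : C ∈ R) (hBC : Subf B C) :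
    (Node.fml B ∈ Δ → (branchModel cs R Δ).sat B) ∧
      (Node.fml (.neg B) ∈ Δ → ¬ (branchModel cs R Δ).sat B) := by
  induction B with
  | prop n => exact ⟨id, fun hn hp => hΔ.neg_notMem hp hn⟩
  | bot => exact ⟨fun h => hΔ.bot_notMem h, fun _ => id⟩
  | neg B ih =>
    obtain ⟨ihT, ihF⟩ := ih (.trans (.neg (.refl _)) hBC)
    exact ⟨ihF, fun h hB => hB (ihT (hΔ.fNeg h))⟩
  | imp A B ihA ihB =>
    obtain ⟨ihAT, ihAF⟩ := ihA (.trans (.impL (.refl _)) hBC)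
    obtain ⟨ihBT, ihBF⟩ := ihB (.trans (.impR (.refl _)) hBC)
    refine ⟨fun h hA => ?_, fun h hAB => ?_⟩
    · exact (hΔ.tImp h).elim (fun hnA => absurd hA (ihAF hnA)) ihBT
    · obtain ⟨hA, hnB⟩ := hΔ.fImp h
      exact ihBF hnB (hAB (ihAT hA))
  | box t B =>
    refine ⟨fun h => ?_, fun h hB => ?_⟩
    · exact .base ⟨.inl ⟨C, hC, .trans (.box (.refl _)) hBC⟩, hΔ.te h⟩
    · have ht : OccRoot R t := ⟨C, hC, .of_subf hBC (.boxT (.refl _))⟩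
      exact hΔ.evNeg_notMem (hΔ.pos_mem_of_mem_ev hB ht) (hΔ.fe h)

end Saturated

theorem exists_model_of_not_tab {cs : ConstSpec Logic.J} (h : ¬ Tab Logic.J cs true cut R Γ) :
    ∃ M, IsModel Logic.J cs M ∧ ∀ B ∈ R, Node.fml B ∈ Γ → M.sat B := by
  obtain ⟨Δ, hΓΔ, hΔ⟩ := exists_isMaxOpen_superset h
  exact ⟨branchModel cs R Δ, branchModel_isModel cs R Δ, fun B hB hBΓ =>
    (hΔ.saturated.truth_lemma hB (.refl B)).1 (hΓΔ hBΓ)⟩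

theorem J_tableau_sound_complete_general (cs : ConstSpec Logic.J) (cut : Bool) (A : Fml) :
    TabProof Logic.J cs true cut A ↔ Valid Logic.J cs A := by
  refine ⟨TabProof.valid, fun hvalid => ?_⟩
  by_contra hA
  obtain ⟨M, hM, hsat⟩ := exists_model_of_not_tab hA
  exact hsat (.neg A) rfl rfl (hvalid M hM)

end JLTab

/-- soundness and completeness of the analytic tableaux for the
basic justification logic J: a J-formula A has a J^e_CS-tableau proof iff A is
J_CS-valid. -/
theorem JLTab.J_tableau_sound_complete (cs : ConstSpec Logic.J) (A : Fml)
    (hA : FmlInLang Logic.J A) :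
    TabProof Logic.J cs true false A ↔ Valid Logic.J cs A :=
  J_tableau_sound_complete_general cs false A
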